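/- arXiv:1708.08118 — 2 statements merged into one kernel-verified Lean document; each statement's English description precedes it below -/
import Mathlib

section
/- (Two-sided Krohn–Rhodes theorem) Let S be a finite semigroup, and let V_S be the smallest class C of finite semigroups such that: (a) every finite semilattice belongs to C; (b) every finite simple group that divides S belongs to C; (c) if U divides V and V ∈ C, then U ∈ C; (d) if U, V ∈ C, then U × V ∈ C; (e) if U, V ∈ C and W is a two-sided semidirect product U ⋈ V for some admissible pair of actions, then W ∈ C. Then S ∈ V_S. -/
open Pointwise

/-- A semigroup `S` *divides* a semigroup `T` if `S` is a homomorphic image of a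
subsemigroup of `T`. -/
def Divides (S : Type) [Mul S] (T : Type) [Mul T] : Prop :=
  ∃ (U : Subsemigroup T) (f : U →ₙ* S), Function.Surjective f

/-- A semilattice: a commutative semigroup in which every element is idempotent. -/
def IsSemilattice (S : Type) [Mul S] : Prop :=
  (∀ a b : S, a * b = b * a) ∧ ∀ a : S, a * a = a

/-- The data of a two-sided semidirect product `S ⋈ T`: a left action and a right
action of `T` on `S` satisfying the usual axioms. -/
structure BowtieData (S T : Type) [Semigroup S] [Semigroup T] where
  lact : T → S → S
  ract : S → T → S
  lact_mul : ∀ t s s', lact t (s * s') = lact t s * lact t s'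
  mul_ract : ∀ s s' t, ract (s * s') t = ract s t * ract s' t
  mul_lact : ∀ t t' s, lact (t * t') s = lact t (lact t' s)
  ract_mul : ∀ s t t', ract s (t * t') = ract (ract s t) t'
  lact_ract : ∀ t s t', ract (lact t s) t' = lact t (ract s t')

/-- The underlying set of the two-sided semidirect product `S ⋈ T`. -/
structure Bowtie {S T : Type} [Semigroup S] [Semigroup T] (d : BowtieData S T) where
  fst : S
  snd : T

instance {S T : Type} [Semigroup S] [Semigroup T] (d : BowtieData S T) :
    Mul (Bowtie d) :=
  ⟨fun a b => ⟨d.ract a.fst b.snd * d.lact a.snd b.fst, a.snd * b.snd⟩⟩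

theorem Bowtie.mul_def {S T : Type} [Semigroup S] [Semigroup T] {d : BowtieData S T}
    (a b : Bowtie d) :
    a * b = ⟨d.ract a.fst b.snd * d.lact a.snd b.fst, a.snd * b.snd⟩ := rfl

/-- The two-sided semidirect product is a semigroup. -/
instance {S T : Type} [Semigroup S] [Semigroup T] (d : BowtieData S T) :
    Semigroup (Bowtie d) where
  mul_assoc a b c := by
    simp only [Bowtie.mul_def, Bowtie.mk.injEq]
    exact ⟨by simp only [d.mul_ract, d.mul_lact, d.ract_mul, d.lact_mul, d.lact_ract,
      mul_assoc], mul_assoc _ _ _⟩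

instance {S T : Type} [Semigroup S] [Semigroup T] [Finite S] [Finite T]
    (d : BowtieData S T) : Finite (Bowtie d) :=
  Finite.of_surjective (fun p : S × T => Bowtie.mk p.1 p.2) fun b => ⟨(b.fst, b.snd), rfl⟩
/-- A bundled finite semigroup. -/
structure FinSgr where
  carrier : Type
  str : Semigroup carrier
  fin : Finite carrier

attribute [instance] FinSgr.str FinSgr.fin

/-- The classes `SL^k` of finite semigroups: `SL^1` is the class of finite semilattices,
and `SL^(k+1)` is the class of finite semigroups dividing some two-sided semidirect
product `A ⋈ B` with `A` a finite semilattice and `B ∈ SL^k`.  (`SL^0` is empty.) -/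
def SL : ℕ → FinSgr → Prop
  | 0, _ => False
  | 1, T => IsSemilattice T.carrier
  | (k+2), T =>
      ∃ (A B : FinSgr) (d : BowtieData A.carrier B.carrier),
        IsSemilattice A.carrier ∧ SL (k+1) B ∧ Divides T.carrier (Bowtie d)

/-- Membership of a finite semigroup in the class `SL^k`. -/
def MemSL (k : ℕ) (S : Type) [Semigroup S] [Finite S] : Prop :=
  SL k ⟨S, inferInstance, inferInstance⟩

/-- `KRClass S` is the smallest class of finite semigroups containing all finite
semilattices and all finite simple groups dividing `S`, and closed under division,
finite direct products, and two-sided semidirect products. -/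
inductive KRClass (S : Type) [Semigroup S] [Finite S] : FinSgr → Prop
  | semilattice (T : FinSgr) : IsSemilattice T.carrier → KRClass S T
  | simpleGroup (G : Type) [Group G] [Finite G] :
      IsSimpleGroup G → Divides G S → KRClass S ⟨G, inferInstance, inferInstance⟩
  | of_divides (U V : FinSgr) : Divides U.carrier V.carrier → KRClass S V → KRClass S U
  | prod (U V : FinSgr) : KRClass S U → KRClass S V →
      KRClass S ⟨U.carrier × V.carrier, inferInstance, inferInstance⟩
  | bowtie (U V : FinSgr) (d : BowtieData U.carrier V.carrier) :
      KRClass S U → KRClass S V →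
      KRClass S ⟨Bowtie d, inferInstance, inferInstance⟩

/-! ### Helpers -/

theorem divides_of_rel {M B : Type} [Semigroup M] [Semigroup B] (P : M → B → Prop)
    (hm : ∀ m b m' b', P m b → P m' b' → P (m * m') (b * b'))
    (hf : ∀ m m' b, P m b → P m' b → m = m')
    (hs : ∀ m, ∃ b, P m b) : Divides M B := by
  classical
  let U : Subsemigroup B := ⟨{b | ∃ m, P m b}, by
    rintro a b ⟨m, h⟩ ⟨m', h'⟩
    exact ⟨_, hm _ _ _ _ h h'⟩⟩
  refine ⟨U, ⟨fun b => Classical.choose b.2, ?_⟩, ?_⟩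
  · intro x y
    exact hf _ _ _ (Classical.choose_spec (x * y).2)
      (hm _ _ _ _ (Classical.choose_spec x.2) (Classical.choose_spec y.2))
  · intro m
    obtain ⟨b, hb⟩ := hs m
    exact ⟨⟨b, m, hb⟩, hf _ _ b (Classical.choose_spec (⟨m, hb⟩ : ∃ m, P m b)) hb⟩

theorem divides_of_inj {M B : Type} [Semigroup M] [Semigroup B] (f : M → B)
    (hm : ∀ x y, f (x * y) = f x * f y) (hf : Function.Injective f) : Divides M B :=
  divides_of_rel (fun m b => f m = b)
    (fun m b m' b' h h' => by rw [hm, h, h'])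
    (fun m m' b h h' => hf (h.trans h'.symm)) (fun m => ⟨_, rfl⟩)

theorem divides_of_surj {M B : Type} [Semigroup M] [Semigroup B] (f : B → M)
    (hm : ∀ x y, f (x * y) = f x * f y) (hf : Function.Surjective f) : Divides M B :=
  divides_of_rel (fun m b => f b = m)
    (fun m b m' b' h h' => by rw [hm, h, h'])
    (fun m m' b h h' => h.symm.trans h') hf

theorem divides_trans {X Y Z : Type} [Semigroup X] [Semigroup Y] [Semigroup Z]
    (h : Divides X Y) (h' : Divides Y Z) : Divides X Z := by
  obtain ⟨U, f, hf⟩ := h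
  obtain ⟨V, g, hg⟩ := h'
  refine divides_of_rel
    (fun x z => ∃ (v : V) (u : U), (v : Z) = z ∧ g v = u ∧ f u = x) ?_ ?_ ?_
  · rintro m b m' b' ⟨v, u, h1, h2, h3⟩ ⟨v', u', h1', h2', h3'⟩
    exact ⟨v * v', u * u', by simp [h1, h1'], by simp [h2, h2'], by simp [h3, h3']⟩
  · rintro m m' b ⟨v, u, h1, h2, h3⟩ ⟨v', u', h1', h2', h3'⟩
    have hv : v = v' := Subtype.ext (h1.trans h1'.symm)
    subst hv
    have hu : u = u' := Subtype.ext (h2.symm.trans h2')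
    subst hu
    exact h3.symm.trans h3'
  · intro m
    obtain ⟨u, hu⟩ := hf m
    obtain ⟨v, hv⟩ := hg u
    exact ⟨v, v, u, rfl, hv, hu⟩

/-- Membership, unbundled. -/
abbrev KR (S : Type) [Semigroup S] [Finite S] (T : Type) [Semigroup T] [Finite T] : Prop :=
  KRClass S ⟨T, inferInstance, inferInstance⟩

section
variable (S : Type) [Semigroup S] [Finite S]

theorem KR.div {U V : Type} [Semigroup U] [Finite U] [Semigroup V] [Finite V]
    (h : Divides U V) (hV : KR S V) : KR S U :=
  KRClass.of_divides ⟨U, inferInstance, inferInstance⟩ ⟨V, inferInstance, inferInstance⟩ h hV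

theorem KR.finpow {V : Type} [Semigroup V] [Finite V] (hV : KR S V) (n : ℕ) :
    KR S (Fin n → V) := by
  induction n with
  | zero =>
    exact KRClass.semilattice _ ⟨fun a b => funext fun i => i.elim0,
      fun a => funext fun i => i.elim0⟩
  | succ n ih =>
    refine KR.div S (V := V × (Fin n → V)) ?_ (KRClass.prod _ _ hV ih)
    refine divides_of_inj (fun f => (f 0, fun i => f i.succ)) (fun x y => rfl) ?_
    intro f g h
    simp only [Prod.mk.injEq] at h
    funext i
    refine Fin.cases h.1 (fun j => congrFun h.2 j) i

theorem KR.pow {V : Type} [Semigroup V] [Finite V] (hV : KR S V) (I : Type) [Finite I] :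
    KR S (I → V) := by
  obtain ⟨n, ⟨e⟩⟩ := Finite.exists_equiv_fin I
  refine KR.div S ?_ (KR.finpow S hV n)
  refine divides_of_inj (fun f i => f (e.symm i)) (fun x y => rfl) ?_
  intro f g h
  funext i
  simpa using congrFun h (e i)

/-- The block product data. -/
def blockData (V T : Type) [Monoid V] [Monoid T] : BowtieData (T × T → V) T where
  lact t f := fun p => f (p.1 * t, p.2)
  ract f t := fun p => f (p.1, t * p.2)
  lact_mul _ _ _ := rfl
  mul_ract _ _ _ := rfl
  mul_lact t t' f := by funext p; simp [mul_assoc]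
  ract_mul f t t' := by funext p; simp [mul_assoc]
  lact_ract _ _ _ := rfl

theorem KR.block {V T : Type} [Monoid V] [Monoid T] [Finite V] [Finite T]
    (hV : KR S V) (hT : KR S T) : KR S (Bowtie (blockData V T)) :=
  KRClass.bowtie ⟨T × T → V, inferInstance, inferInstance⟩ ⟨T, inferInstance, inferInstance⟩
    (blockData V T) (KR.pow S hV _) hT

theorem block_fst {V T : Type} [Monoid V] [Monoid T] (a b : Bowtie (blockData V T)) (p q : T) :
    (a * b).fst (p, q) = a.fst (p, b.snd * q) * b.fst (p * a.snd, q) := rfl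

theorem block_snd {V T : Type} [Monoid V] [Monoid T] (a b : Bowtie (blockData V T)) :
    (a * b).snd = a.snd * b.snd := rfl

/-- Two-element semilattice. -/
inductive U1 where
  | one : U1
  | zero : U1

instance : Monoid U1 where
  mul a b := match a with
    | .one => b
    | .zero => .zero
  one := .one
  mul_assoc a b c := by cases a <;> rfl
  one_mul a := rfl
  mul_one a := by cases a <;> rfl

instance : Finite U1 :=
  Finite.of_surjective (fun b : Bool => if b then U1.one else U1.zero) (by
    intro x; cases x
    · exact ⟨true, rfl⟩
    · exact ⟨false, rfl⟩)

theorem KR.u1 : KR S U1 := by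
  refine KRClass.semilattice _ ⟨?_, ?_⟩
  · intro a b; cases a <;> cases b <;> rfl
  · intro a; cases a <;> rfl

/-- Records a word over `N ∪ {c}`: the prefix and the suffix in `N`. -/
inductive PP (N : Type) where
  | a : N → PP N
  | b : N → N → PP N

instance (N : Type) [Monoid N] : Mul (PP N) where
  mul x y := match x, y with
    | .a n, .a n' => .a (n * n')
    | .a n, .b u v => .b (n * u) v
    | .b u v, .a n => .b u (v * n)
    | .b u _, .b _ v => .b u v

section
variable {N : Type} [Monoid N]
theorem PP.aa (n n' : N) : PP.a n * PP.a n' = PP.a (n * n') := rfl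
theorem PP.ab (n u v : N) : PP.a n * PP.b u v = PP.b (n * u) v := rfl
theorem PP.ba (n u v : N) : PP.b u v * PP.a n = PP.b u (v * n) := rfl
theorem PP.bb (u v u' v' : N) : PP.b u v * PP.b u' v' = PP.b u v' := rfl
end

instance (N : Type) [Monoid N] : Monoid (PP N) where
  one := .a 1
  mul_assoc x y z := by
    cases x <;> cases y <;> cases z <;> simp [PP.aa, PP.ab, PP.ba, PP.bb, mul_assoc]
  one_mul x := by
    change PP.a 1 * x = x
    cases x <;> simp [PP.aa, PP.ab]
  mul_one x := by
    change x * PP.a 1 = x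
    cases x <;> simp [PP.aa, PP.ba]

instance (N : Type) [Finite N] : Finite (PP N) :=
  Finite.of_surjective (fun x : N ⊕ N × N => match x with
    | .inl n => PP.a n
    | .inr p => PP.b p.1 p.2) (by
    intro x
    cases x with
    | a n => exact ⟨.inl n, rfl⟩
    | b u v => exact ⟨.inr (u, v), rfl⟩)

/-- The value `n`, or `1` once `c` has been seen. -/
def sel {N : Type} [Monoid N] (t : U1) (n : N) : N := match t with
  | .one => n
  | .zero => 1

/-- The embedding of `PP N` in a block product. -/
def ppEmb {N : Type} [Monoid N] (x : PP N) : Bowtie (blockData (N × N) U1) := match x with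
  | .a n => ⟨fun p => (sel p.1 n, sel p.2 n), .one⟩
  | .b u v => ⟨fun p => (sel p.1 u, sel p.2 v), .zero⟩

theorem Bowtie_ext' {V T : Type} [Monoid V] [Monoid T] {a b : Bowtie (blockData V T)}
    (h1 : ∀ p q, a.fst (p, q) = b.fst (p, q)) (h2 : a.snd = b.snd) : a = b := by
  cases a; cases b
  simp only at h1 h2
  subst h2
  congr
  funext ⟨p, q⟩
  exact h1 p q

theorem U1.zm (p : U1) : U1.zero * p = U1.zero := rfl
theorem U1.om (p : U1) : U1.one * p = p := rfl
theorem U1.mz (p : U1) : p * U1.zero = U1.zero := by cases p <;> rfl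
theorem U1.mo (p : U1) : p * U1.one = p := by cases p <;> rfl

theorem KR.pp {N : Type} [Monoid N] [Finite N] (hN : KR S N) : KR S (PP N) := by
  refine KR.div S ?_ (KR.block S (V := N × N) (KRClass.prod _ _ hN hN) (KR.u1 S))
  refine divides_of_inj ppEmb ?_ ?_
  · intro x y
    refine Bowtie_ext' ?_ ?_
    · intro p q
      rw [block_fst]
      cases x <;> cases y <;> cases p <;> cases q <;>
        simp [PP.aa, PP.ab, PP.ba, PP.bb, ppEmb, U1.zm, U1.om, U1.mz, U1.mo, sel]
    · rw [block_snd]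
      cases x <;> cases y <;> rfl
  · intro x y h
    have h1 := congrArg (fun z => z.fst (U1.one, U1.one)) h
    have h2 := congrArg (fun z => z.snd) h
    clear h
    cases x <;> cases y <;> simp_all [ppEmb, sel]

theorem local_step {M Q : Type} [Monoid M] [Finite M] [Monoid Q] [Finite Q]
    (N : Submonoid M) (c : M) (hgen : ∀ K : Submonoid M, N ≤ K → c ∈ K → K = ⊤)
    (γ : Q → M) (κ : M → Q) (h1 : γ 1 = c)
    (h2 : ∀ z n z', γ (z * κ n * z') = γ z * n * γ z')
    (hN : KR S N) (hQ : KR S Q) : KR S M := by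
  refine KR.div S ?_ (KR.block S (V := Q) (T := PP N) hQ (KR.pp S hN))
  let R : M → Bowtie (blockData Q (PP N)) → Prop := fun m w =>
    (∃ n : N, w.snd = .a n ∧ m = n ∧ ∀ p q, w.fst (p, q) = 1) ∨
    (∃ (u v : N) (z : Q), w.snd = .b u v ∧ m = u * γ z * v ∧
      (∀ n q, w.fst (.a n, q) = z) ∧
      (∀ u' v' q, w.fst (.b u' v', q) = κ (v' * u) * z))
  have hmul : ∀ m b m' b', R m b → R m' b' → R (m * m') (b * b') := by
    rintro m b m' b' (⟨n, e1, e2, e3⟩ | ⟨u, v, z, e1, e2, e3, e4⟩)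
      (⟨n', f1, f2, f3⟩ | ⟨u', v', z', f1, f2, f3, f4⟩)
    · refine Or.inl ⟨n * n', ?_, ?_, ?_⟩
      · rw [block_snd, e1, f1, PP.aa]
      · simp [e2, f2]
      · intro p q
        rw [block_fst, e3, f3, one_mul]
    · refine Or.inr ⟨n * u', v', z', ?_, ?_, ?_, ?_⟩
      · rw [block_snd, e1, f1, PP.ab]
      · simp [e2, f2, mul_assoc]
      · intro p q
        rw [block_fst, e3, e1, PP.aa, f3, one_mul]
      · intro x y q
        rw [block_fst, e3, e1, PP.ba, f4, one_mul]
        simp [mul_assoc]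
    · refine Or.inr ⟨u, v * n', z, ?_, ?_, ?_, ?_⟩
      · rw [block_snd, e1, f1, PP.ba]
      · simp [e2, f2, mul_assoc]
      · intro p q
        rw [block_fst, e3, f3, mul_one]
      · intro x y q
        rw [block_fst, e4, f3, mul_one]
    · refine Or.inr ⟨u, v', z * κ (v * u') * z', ?_, ?_, ?_, ?_⟩
      · rw [block_snd, e1, f1, PP.bb]
      · rw [h2, e2, f2]
        simp [mul_assoc]
      · intro p q
        rw [block_fst, e3, e1, PP.ab, f4, mul_assoc]
      · intro x y q
        rw [block_fst, e4, e1, PP.bb, f4]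
        simp [mul_assoc]
  have hNR : ∀ n : N, ∃ b, R n b := fun n => ⟨⟨fun _ => 1, .a n⟩, Or.inl ⟨n, rfl, rfl, fun _ _ => rfl⟩⟩
  refine divides_of_rel R hmul ?_ ?_
  · rintro m m' b (⟨n, e1, e2, e3⟩ | ⟨u, v, z, e1, e2, e3, e4⟩)
      (⟨n', f1, f2, f3⟩ | ⟨u', v', z', f1, f2, f3, f4⟩)
    · rw [e1] at f1
      cases f1
      rw [e2, f2]
    · rw [e1] at f1
      cases f1
    · rw [e1] at f1
      cases f1
    · rw [e1] at f1
      cases f1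
      have := (e3 1 1).symm.trans (f3 1 1)
      rw [e2, f2, this]
  · let K : Submonoid M :=
      { carrier := {m | ∃ b, R m b}
        mul_mem' := by
          rintro a b ⟨x, hx⟩ ⟨y, hy⟩
          exact ⟨_, hmul _ _ _ _ hx hy⟩
        one_mem' := hNR 1 }
    have hK : K = ⊤ := by
      refine hgen K (fun n hn => hNR ⟨n, hn⟩) ?_
      refine ⟨⟨fun p => match p.1 with
        | .a _ => 1
        | .b _ v => κ v, .b 1 1⟩, Or.inr ⟨1, 1, 1, rfl, ?_, ?_, ?_⟩⟩
      · simp [h1]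
      · intro n q; rfl
      · intro u v q; simp
    intro m
    have : m ∈ K := hK ▸ Submonoid.mem_top m
    exact this

/-- Carrier of the local divisor before the quotient. -/
def locSub {M : Type} [Monoid M] (c : M) : Submonoid M where
  carrier := {x | ∃ y, c * x = y * c}
  one_mem' := ⟨1, by simp⟩
  mul_mem' := by
    rintro a b ⟨x, hx⟩ ⟨y, hy⟩
    exact ⟨x * y, by rw [← mul_assoc, hx, mul_assoc, hy, mul_assoc]⟩

/-- The congruence defining the local divisor. -/
def locCon {M : Type} [Monoid M] (c : M) : Con (locSub c) where
  r x y := c * (x : M) = c * y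
  iseqv := ⟨fun _ => rfl, fun h => h.symm, fun h h' => h.trans h'⟩
  mul' := by
    rintro w x y z h h'
    obtain ⟨t, ht⟩ := x.2
    change c * ((w : M) * y) = c * ((x : M) * z)
    rw [← mul_assoc, h, ht, mul_assoc, h', ← mul_assoc, ← ht, mul_assoc]

theorem local_div {M : Type} [Monoid M] [Finite M] (c : M) (hc : ¬ IsUnit c) :
    ∃ (Q : Type) (_ : Monoid Q) (_ : Finite Q) (γ : Q → M) (κ : M → Q),
      γ 1 = c ∧ (∀ z n z', γ (z * κ n * z') = γ z * n * γ z') ∧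
      Nat.card Q < Nat.card M ∧ Divides Q M := by
  let γ : (locCon c).Quotient → M := fun q => Quotient.liftOn' q (fun x => c * (x : M)) (fun _ _ h => h)
  have hfin : Finite (locCon c).Quotient := Finite.of_surjective _ (Con.mk'_surjective (c := locCon c))
  have hγ : ∀ x : locSub c, γ (x : (locCon c).Quotient) = c * (x : M) := fun _ => rfl
  have hinj : Function.Injective γ := by
    intro x y h
    induction x using Con.induction_on with | _ x =>
    induction y using Con.induction_on with | _ y =>
    exact (Con.eq _).2 h
  refine ⟨(locCon c).Quotient, inferInstance, hfin, γ,
    fun n => ((⟨n * c, c * n, by rw [mul_assoc]⟩ : locSub c) : (locCon c).Quotient), ?_, ?_, ?_, ?_⟩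
  · exact mul_one c
  · intro z n z'
    induction z using Con.induction_on with | _ x =>
    induction z' using Con.induction_on with | _ y =>
    rw [← Con.coe_mul, ← Con.coe_mul, hγ, hγ, hγ]
    simp [mul_assoc]
  · refine lt_of_le_of_ne (Nat.card_le_card_of_injective γ hinj) ?_
    intro h
    have hb := (Nat.bijective_iff_injective_and_card γ).2 ⟨hinj, h⟩
    obtain ⟨q, hq⟩ := hb.2 1
    induction q using Con.induction_on with | _ x =>
    rw [hγ] at hq
    exact hc (IsUnit.of_mul_eq_one _ hq)
  · refine divides_trans (Y := locSub c) ?_ ?_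
    · exact divides_of_surj (fun x => (x : (locCon c).Quotient)) (fun _ _ => rfl) (Con.mk'_surjective (c := locCon c))
    · exact divides_of_inj Subtype.val (fun _ _ => rfl) Subtype.val_injective

theorem group_step {G : Type} [Group G] [Finite G] (N : Subgroup G) [N.Normal]
    (hN : KR S N) (hQ : KR S (G ⧸ N)) : KR S G := by
  refine KR.div S ?_ (KR.block S (V := N) (T := G ⧸ N) hN hQ)
  let s : G ⧸ N → G := Quotient.out
  have hs : ∀ q : G ⧸ N, ((s q : G) : G ⧸ N) = q := fun q => Quotient.out_eq' q
  let f : G → Bowtie (blockData N (G ⧸ N)) := fun g =>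
    ⟨fun p => ⟨s p.1 * g * (s (p.1 * (g : G ⧸ N)))⁻¹, by
      rw [← QuotientGroup.eq_one_iff]
      simp [hs]⟩, (g : G ⧸ N)⟩
  refine divides_of_inj f ?_ ?_
  · intro x y
    refine Bowtie_ext' ?_ rfl
    intro p q
    rw [block_fst]
    apply Subtype.ext
    simp [f, mul_assoc]
  · intro x y h
    have h2 : (x : G ⧸ N) = y := congrArg (fun z => z.snd) h
    have h1 := congrArg (fun z => ((z.fst (1, 1) : N) : G)) h
    simpa [f, h2] using h1

theorem group_case {G : Type} [Group G] [Finite G]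
    (ih : ∀ (M : Type) [Monoid M] [Finite M], Nat.card M < Nat.card G → Divides M G → KR S M)
    (hsimp : IsSimpleGroup G → KR S G) : KR S G := by
  classical
  by_cases ht : Subsingleton G
  · exact KRClass.semilattice _ ⟨fun a b => ht.elim _ _, fun a => ht.elim _ _⟩
  have hnt : Nontrivial G := not_subsingleton_iff_nontrivial.1 ht
  by_cases hs : IsSimpleGroup G
  · exact hsimp hs
  have : ∃ N : Subgroup G, N.Normal ∧ N ≠ ⊥ ∧ N ≠ ⊤ := by
    by_contra hcon
    push Not at hcon
    exact hs ⟨fun N hN => or_iff_not_imp_left.2 (hcon N hN)⟩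
  obtain ⟨N, hN, hb, ht⟩ := this
  have hc := N.card_eq_card_quotient_mul_card_subgroup
  have p1 : 1 < Nat.card N := (Subgroup.one_lt_card_iff_ne_bot N).2 hb
  have p2 : 0 < Nat.card (G ⧸ N) := Nat.card_pos
  refine group_step S N (ih N ?_ ?_) (ih (G ⧸ N) ?_ ?_)
  · refine lt_of_le_of_ne N.card_le_card_group ?_
    intro h
    exact ht (Subgroup.eq_top_of_card_eq N h)
  · exact divides_of_inj Subtype.val (fun _ _ => rfl) Subtype.val_injective
  · rw [hc]
    exact lt_mul_of_one_lt_right p2 p1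
  · exact divides_of_surj (fun g => (g : G ⧸ N)) (fun _ _ => rfl) Quotient.mk''_surjective

theorem monoid_case (n : ℕ) : ∀ (M : Type) [Monoid M] [Finite M], Nat.card M = n →
    (∀ (G : Type) [Group G] [Finite G], IsSimpleGroup G → Divides G M → Divides G S) →
    KR S M := by
  induction n using Nat.strong_induction_on with
  | _ n IH =>
  intro M _ _ hn hG
  have ih : ∀ (M' : Type) [Monoid M'] [Finite M'], Nat.card M' < Nat.card M →
      Divides M' M → KR S M' := by
    intro M' _ _ hlt hd
    refine IH _ (hn ▸ hlt) M' rfl ?_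
    intro G _ _ hs hd'
    exact hG G hs (divides_trans hd' hd)
  by_cases hu : ∀ a : M, IsUnit a
  · letI : Group M := groupOfIsUnit hu
    refine group_case S (G := M) ih ?_
    intro hs
    exact KRClass.simpleGroup M hs (hG M hs (divides_of_inj id (fun _ _ => rfl) fun _ _ h => h))
  · push Not at hu
    obtain ⟨a, ha⟩ := hu
    rcases eq_top_or_exists_le_coatom (IsUnit.submonoid M) with h | ⟨N, hN, hle⟩
    · exact absurd (show a ∈ IsUnit.submonoid M from h ▸ Submonoid.mem_top a) ha
    obtain ⟨c, hc⟩ : ∃ c, c ∉ N := by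
      by_contra hcon
      push Not at hcon
      exact hN.1 ((Submonoid.eq_top_iff' N).2 hcon)
    have hcu : ¬ IsUnit c := fun h => hc (hle h)
    obtain ⟨Q, _, _, γ, κ, h1, h2, h3, h4⟩ := local_div c hcu
    refine local_step S N c ?_ γ κ h1 h2 (ih N ?_ ?_) (ih Q h3 h4)
    · intro K hK hcK
      refine hN.2 K (lt_of_le_of_ne hK ?_)
      rintro rfl
      exact hc hcK
    · exact Finite.card_subtype_lt hc
    · exact divides_of_inj Subtype.val (fun _ _ => rfl) Subtype.val_injective

theorem withOne_div {G : Type} [Group G] [Nontrivial G]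
    (h : Divides G (WithOne S)) : Divides G S := by
  obtain ⟨U, f, hf⟩ := h
  refine divides_of_rel (fun g s => ∃ h : (s : WithOne S) ∈ U, f ⟨s, h⟩ = g) ?_ ?_ ?_
  · rintro m b m' b' ⟨h, e⟩ ⟨h', e'⟩
    refine ⟨?_, ?_⟩
    · rw [WithOne.coe_mul]
      exact U.mul_mem h h'
    · rw [← e, ← e', ← map_mul]
      rfl
  · rintro m m' b ⟨h, e⟩ ⟨h', e'⟩
    exact e.symm.trans e'
  · have key : ∀ g : G, g ≠ 1 → ∃ s : S, ∃ h : (s : WithOne S) ∈ U, f ⟨s, h⟩ = g := by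
      intro g hg
      obtain ⟨⟨x, hx⟩, e⟩ := hf g
      induction x using WithOne.cases_on
      · exfalso
        apply hg
        have : g * g = g := by
          rw [← e, ← map_mul]
          congr 1
        exact mul_eq_left.1 this
      · exact fun e => ⟨_, hx, e⟩
    intro g
    by_cases hg : g = 1
    · subst hg
      obtain ⟨k, hk⟩ := exists_ne (1 : G)
      obtain ⟨s, hs, e⟩ := key k hk
      obtain ⟨s', hs', e'⟩ := key k⁻¹ (inv_ne_one.2 hk)
      refine ⟨s * s', ?_, ?_⟩
      · rw [WithOne.coe_mul]
        exact U.mul_mem hs hs'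
      · rw [← mul_inv_cancel k, ← e', ← e, ← map_mul]
        rfl
    · exact key g hg

end

/-- two-sided Krohn–Rhodes theorem.  Every finite semigroup `S`
belongs to the smallest class of finite semigroups which contains the finite
semilattices and the finite simple groups dividing `S` and which is closed under
division, finite direct products and two-sided semidirect products. -/
theorem two_sided_krohn_rhodes (S : Type) [Semigroup S] [Finite S] :
    KRClass S ⟨S, inferInstance, inferInstance⟩ := by
  haveI : Finite (WithOne S) := inferInstanceAs (Finite (Option S))
  refine KR.div S (V := WithOne S) ?_ (monoid_case S _ (WithOne S) rfl ?_)
  · exact divides_of_inj (fun s => (s : WithOne S)) (fun _ _ => WithOne.coe_mul _ _)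
      WithOne.coe_injective
  · intro G _ _ hs hd
    haveI := hs.toNontrivial
    exact withOne_div S hd
end

section
/- Let S be a finite semigroup and let X ⊆ S be aperiodic-pointlike. Then for every n ≥ 1 with X^n·X^n = X^n (setwise powers), the set ⋃_{k ≥ n} X^k is aperiodic-pointlike. -/
open Pointwise

/-- The `n`-th power of an element of a semigroup, for `n ≥ 1` (with the junk value
`sgPow t 0 = t`). -/
def sgPow {T : Type} [Mul T] (t : T) : ℕ → T
  | 0 => t
  | 1 => t
  | (n+2) => sgPow t (n+1) * t

/-- A semigroup is aperiodic if for every element `t` there is `n ≥ 1` with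
`t^(n+1) = t^n`. -/
def IsAperiodic (T : Type) [Mul T] : Prop :=
  ∀ t : T, ∃ n, 1 ≤ n ∧ sgPow t (n + 1) = sgPow t n
/-- A relational morphism from `S` to `T`: a fully defined relation whose graph is
a subsemigroup of `S × T`. -/
def IsRelMorphism {S T : Type} [Mul S] [Mul T] (ρ : S → Set T) : Prop :=
  (∀ s, (ρ s).Nonempty) ∧ ∀ s s', ρ s * ρ s' ⊆ ρ (s * s')

/-- A subset `X` of a finite semigroup `S` is aperiodic-pointlike if every relational
morphism from `S` to a finite aperiodic semigroup `T` relates all of `X` to a single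
element of `T`. -/
def AperiodicPointlike {S : Type} [Semigroup S] (X : Set S) : Prop :=
  ∀ (T : Type) [Semigroup T] [Finite T], IsAperiodic T →
    ∀ ρ : S → Set T, IsRelMorphism ρ → ∃ t : T, X ⊆ {s : S | t ∈ ρ s}

theorem sgPow_succ_aux {T : Type} [Mul T] (t : T) (k : ℕ) (hk : 1 ≤ k) :
    sgPow t (k + 1) = sgPow t k * t := by
  obtain ⟨j, rfl⟩ : ∃ j, k = j + 1 := ⟨k - 1, by omega⟩
  rfl

theorem sgPow_add_aux {T : Type} [Semigroup T] (t : T) (a b : ℕ) (ha : 1 ≤ a) (hb : 1 ≤ b) :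
    sgPow t (a + b) = sgPow t a * sgPow t b := by
  induction b, hb using Nat.le_induction with
  | base => exact sgPow_succ_aux t a ha
  | succ b hb ih =>
    rw [← add_assoc, sgPow_succ_aux t (a + b) (by omega), ih, sgPow_succ_aux t b hb, mul_assoc]

theorem sgPow_stable_aux {T : Type} [Mul T] (t : T) (m : ℕ) (hm : 1 ≤ m)
    (h : sgPow t (m + 1) = sgPow t m) (k : ℕ) (hk : m ≤ k) : sgPow t k = sgPow t m := by
  induction k, hk using Nat.le_induction with
  | base => rfl
  | succ k hk ih => rw [sgPow_succ_aux t k (by omega), ih, ← sgPow_succ_aux t m hm, h]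

theorem sgPow_period_aux {T : Type} [Semigroup T] (t : T) (n : ℕ) (hn : 1 ≤ n)
    (h : sgPow t n * sgPow t n = sgPow t n) (k : ℕ) (hk : n ≤ k) :
    sgPow t (k + n) = sgPow t k := by
  obtain rfl | hlt := hk.eq_or_lt
  · rw [sgPow_add_aux t n n hn hn, h]
  · obtain ⟨j, rfl⟩ : ∃ j, k = j + n := ⟨k - n, by omega⟩
    have hj : 1 ≤ j := by omega
    rw [sgPow_add_aux t (j + n) n (by omega) hn, sgPow_add_aux t j n hj hn, mul_assoc, h]

theorem sgPow_rel_aux {S T : Type} [Mul S] [Mul T] (ρ : S → Set T) (hρ : IsRelMorphism ρ)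
    (X : Set S) (t : T) (hX : X ⊆ {s : S | t ∈ ρ s}) (k : ℕ) (hk : 1 ≤ k) :
    sgPow X k ⊆ {s : S | sgPow t k ∈ ρ s} := by
  induction k, hk using Nat.le_induction with
  | base => exact hX
  | succ k hk ih =>
    rw [sgPow_succ_aux X k hk, sgPow_succ_aux t k hk]
    rintro _ ⟨a, ha, b, hb, rfl⟩
    exact hρ.2 a b (Set.mul_mem_mul (ih ha) (hX hb))

/-- If `X` is an aperiodic-pointlike subset of a finite semigroup `S`,
then for every `n ≥ 1` such that the setwise power `X^n` is idempotent, the set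
`⋃_{k ≥ n} X^k` is aperiodic-pointlike. -/
theorem union_powers_aperiodicPointlike
    (S : Type) [Semigroup S] [Finite S] (X : Set S)
    (h : AperiodicPointlike X)
    (n : ℕ) (hn : 1 ≤ n) (hid : sgPow X n * sgPow X n = sgPow X n) :
    AperiodicPointlike (⋃ k, ⋃ (_ : n ≤ k), sgPow X k) := by
  intro T _ _ hT ρ hρ
  obtain ⟨t, ht⟩ := h T hT ρ hρ
  obtain ⟨m, hm, hst⟩ := hT t
  refine ⟨sgPow t m, ?_⟩
  intro s hs
  simp only [Set.mem_iUnion] at hs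
  obtain ⟨k, hk, hs⟩ := hs
  letI : Semigroup (Set S) := Set.semigroup
  have key : ∀ j : ℕ, sgPow X (k + j * n) = sgPow X k := by
    intro j
    induction j with
    | zero => simp
    | succ j ih =>
      rw [Nat.succ_mul, ← add_assoc]
      exact (sgPow_period_aux X n hn hid (k + j * n) (by omega)).trans ih
  have h1 : m ≤ k + m * n := by nlinarith
  have h2 := sgPow_rel_aux ρ hρ X t ht (k + m * n) (by omega)
  rw [key m, sgPow_stable_aux t m hm hst _ h1] at h2
  exact h2 hs
end
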